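/- Let g be a complex semisimple Lie algebra, χ ∈ g a semisimple element, and for t ∈ ℂ let g_t = {y ∈ g : [χ,y] = t·y}. If e ∈ g_1 is a nonzero (necessarily nilpotent) element, then there exist h ∈ g_0 and f ∈ g_{-1} such that (e,h,f) is an sl(2)-triple: [h,e] = 2e, [h,f] = -2f, [e,f] = h. -/

import Mathlib

/-!
Let `A` be a nilpotent operator. If `[A, [A, B]] = 0` then `A * B` is nilpotent, hence traceless.
For `A = ad e` this says that `e` is orthogonal to `ker (ad e)²` under the Killing form, and so
`e = [e, [e, y]]` for some `y`. Replacing `y` by a multiple of its component of degree `-c`, where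
`c` is the degree of `e`, gives `h = [e, z]` of degree `0` with `[h, e] = 2e`. Now `ad h` has only
natural-number eigenvalues on `ker (ad e)`, so `ad h + 2` is invertible there; this allows `z` to be
corrected by an element of `ker (ad e)` to some `f` with `[h, f] = -2f`. The corrected `f` need not
be homogeneous, but its component of degree `-c` satisfies the same two equations.
-/

section Commutator

variable {K R : Type*} [CommRing K] [Ring R] [Algebra K R] {A B C X : R}

lemma ring_lie_mul (x y z : R) : ⁅x, y * z⁆ = ⁅x, y⁆ * z + y * ⁅x, z⁆ := by
  simp only [Ring.lie_def]
  noncomm_ring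

lemma ring_mul_lie (x y z : R) : ⁅x * y, z⁆ = x * ⁅y, z⁆ + ⁅x, z⁆ * y := by
  simp only [Ring.lie_def]
  noncomm_ring

lemma lie_pow_eq_smul {c : K} (hXA : ⁅X, A⁆ = c • A) (n : ℕ) :
    ⁅X, A ^ n⁆ = (n * c) • A ^ n := by
  induction n with
  | zero => simp [Ring.lie_def]
  | succ n ih =>
    rw [pow_succ, ring_lie_mul, ih, hXA, smul_mul_assoc, mul_smul_comm, ← add_smul]
    push_cast
    ring_nf

lemma pow_succ_lie_eq_smul {a : K} (hAB : ⁅A, B⁆ = C) (hCA : ⁅C, A⁆ = (2 * a) • A) (n : ℕ) :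
    ⁅A ^ (n + 1), B⁆ = (n + 1 : K) • (C * A ^ n - (n * a) • A ^ n) := by
  induction n with
  | zero => simp [hAB]
  | succ n ih =>
    have hAC : A ^ (n + 1) * C = C * A ^ (n + 1) - ((n + 1) * (2 * a)) • A ^ (n + 1) := by
      have := lie_pow_eq_smul hCA (n + 1)
      rw [Ring.lie_def, sub_eq_iff_eq_add'] at this
      rw [this]
      push_cast
      abel
    rw [pow_succ A (n + 1), ring_mul_lie, ih, hAB, hAC, smul_mul_assoc, sub_mul, mul_assoc,
      smul_mul_assoc, ← pow_succ]
    push_cast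
    module

end Commutator

section NilpotentCommutator

variable {R : Type*} [Ring R] {A B : R}

lemma pow_succ_lie_eq_smul_of_commute (hcomm : Commute A ⁅A, B⁆) (n : ℕ) :
    ⁅A ^ (n + 1), B⁆ = (n + 1) • (⁅A, B⁆ * A ^ n) := by
  have h := pow_succ_lie_eq_smul (K := ℤ) (a := 0) (A := A) (B := B) rfl
    (by simpa using commute_iff_lie_eq.mp hcomm.symm) n
  simpa [← natCast_zsmul] using h

lemma isNilpotent_lie_of_commute [IsAddTorsionFree R] (hcomm : Commute A ⁅A, B⁆)
    (hA : IsNilpotent A) : IsNilpotent ⁅A, B⁆ := by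
  set C := ⁅A, B⁆
  suffices descend : ∀ j m, A ^ j * C ^ m = 0 → IsNilpotent C by
    obtain ⟨k, hk⟩ := hA
    exact descend k 0 (by simp [hk])
  intro j
  induction j with
  | zero => exact fun m hm ↦ ⟨m, by simpa using hm⟩
  | succ j ih =>
    intro m hm
    have hm' : C ^ m * A ^ (j + 1) = 0 := by rw [← (hcomm.pow_pow (j + 1) m).eq, hm]
    have hzero : C ^ m * ⁅A ^ (j + 1), B⁆ * C ^ m = 0 := by
      rw [Ring.lie_def, mul_sub, sub_mul, ← mul_assoc, hm', mul_assoc _ (B * _), mul_assoc B, hm]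
      simp only [zero_mul, mul_zero, sub_zero]
    rw [pow_succ_lie_eq_smul_of_commute hcomm, mul_smul_comm, smul_mul_assoc,
      smul_eq_zero_iff_right j.succ_ne_zero] at hzero
    refine ih (m + 1 + m) ?_
    rw [← hzero, ← mul_assoc, ← pow_succ, mul_assoc, (hcomm.pow_pow j m).eq, ← mul_assoc,
      (hcomm.pow_pow j _).eq, pow_add]

lemma isNilpotent_mul_of_commute_lie [IsAddTorsionFree R] (hcomm : Commute A ⁅A, B⁆)
    (hA : IsNilpotent A) : IsNilpotent (A * B) := by
  obtain ⟨p, hp⟩ := isNilpotent_lie_of_commute hcomm hA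
  suffices descend : ∀ j m, A ^ j * (A * B) ^ m = 0 → IsNilpotent (A * B) by
    obtain ⟨k, hk⟩ := hA
    exact descend k 0 (by simp [hk])
  intro j
  induction j with
  | zero => exact fun m hm ↦ ⟨m, by simpa using hm⟩
  | succ j ih =>
    intro m hm
    have hstep : A ^ j * (A * B) ^ (m + 1) = (j + 1) • (⁅A, B⁆ * (A ^ j * (A * B) ^ m)) := by
      have hAB : A ^ (j + 1) * B = B * A ^ (j + 1) + (j + 1) • (⁅A, B⁆ * A ^ j) := by
        rw [← pow_succ_lie_eq_smul_of_commute hcomm, Ring.lie_def]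
        abel
      calc A ^ j * (A * B) ^ (m + 1)
          = A ^ (j + 1) * B * (A * B) ^ m := by rw [pow_succ' (A * B), pow_succ A]; noncomm_ring
        _ = B * (A ^ (j + 1) * (A * B) ^ m) + (j + 1) • (⁅A, B⁆ * (A ^ j * (A * B) ^ m)) := by
          rw [hAB, add_mul, smul_mul_assoc, mul_assoc, mul_assoc]
        _ = (j + 1) • (⁅A, B⁆ * (A ^ j * (A * B) ^ m)) := by rw [hm, mul_zero, zero_add]
    have hiter (q : ℕ) :
        A ^ j * (A * B) ^ (m + q) = (j + 1) ^ q • (⁅A, B⁆ ^ q * (A ^ j * (A * B) ^ m)) := by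
      induction q with
      | zero => simp
      | succ q ihq =>
        calc A ^ j * (A * B) ^ (m + (q + 1))
            = A ^ j * (A * B) ^ (m + q) * (A * B) := by rw [← add_assoc, pow_succ, mul_assoc]
          _ = (j + 1) ^ q • (⁅A, B⁆ ^ q * (A ^ j * (A * B) ^ (m + 1))) := by
            rw [ihq, smul_mul_assoc, mul_assoc, mul_assoc, ← pow_succ]
          _ = (j + 1) ^ (q + 1) • (⁅A, B⁆ ^ (q + 1) * (A ^ j * (A * B) ^ m)) := by
            rw [hstep, mul_smul_comm, smul_smul, ← pow_succ, ← mul_assoc, ← pow_succ]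
    exact ih (m + p) (by rw [hiter, hp, zero_mul, smul_zero])

end NilpotentCommutator

section LieAlgebraOfAssociative

attribute [local instance] LieRing.ofAssociativeRing

lemma isNilpotent_of_lie_eq_smul {K R : Type*} [Field K] [CharZero K] [Ring R] [Algebra K R]
    [FiniteDimensional K R] {X A : R} {c : K} (hc : c ≠ 0) (hXA : ⁅X, A⁆ = c • A) :
    IsNilpotent A := by
  by_contra hA
  have hasEigenvalue (n : ℕ) : (LieAlgebra.ad K R X).HasEigenvalue (n * c) :=
    Module.End.hasEigenvalue_of_hasEigenvector (x := A ^ n)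
      ⟨Module.End.mem_eigenspace_iff.mpr (lie_pow_eq_smul hXA n), fun h ↦ hA ⟨n, h⟩⟩
  have injective : Function.Injective fun n : ℕ ↦ (n * c : K) :=
    (mul_left_injective₀ hc).comp Nat.cast_injective
  exact Set.infinite_of_injective_forall_mem injective hasEigenvalue
    (LieAlgebra.ad K R X).finite_hasEigenvalue

end LieAlgebraOfAssociative

section WeightsOnKernel

open Module

variable {K V : Type*} [Field K] [AddCommGroup V] [Module K V]

lemma exists_nat_eq_eigenvalue_of_mem_ker [CharZero K] {A B H : End K V} (hAB : ⁅A, B⁆ = H)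
    (hHA : ⁅H, A⁆ = (2 : K) • A) (hA : IsNilpotent A) {μ : K} {v : V} (hv : v ≠ 0) (hAv : A v = 0)
    (hHv : H v = μ • v) : ∃ n : ℕ, μ = n := by
  by_contra! hμ
  have mem_range (n : ℕ) : v ∈ (A ^ n).range := by
    induction n with
    | zero => simp
    | succ n ih =>
      obtain ⟨w, hw⟩ := ih
      have hAw : (A ^ (n + 1)) w = 0 := by rw [pow_succ', End.mul_apply, hw, hAv]
      have hBw : (A ^ (n + 1)) (B w) = ((n + 1) * (μ - n)) • v := by
        have := LinearMap.congr_fun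
          (pow_succ_lie_eq_smul (a := (1 : K)) hAB (by simpa using hHA) n) w
        simpa [Ring.lie_def, hAw, hw, hHv, ← sub_smul, smul_smul] using this
      have hcoeff : (n + 1) * (μ - n) ≠ 0 :=
        mul_ne_zero n.cast_add_one_ne_zero (sub_ne_zero.mpr (hμ n))
      exact (Submodule.smul_mem_iff _ hcoeff).mp ⟨B w, hBw⟩
  obtain ⟨k, hk⟩ := hA
  exact hv (by simpa [hk] using mem_range k)

lemma surjOn_add_two_smul_ker [CharZero K] [FiniteDimensional K V] {A B H : End K V}
    (hAB : ⁅A, B⁆ = H) (hHA : ⁅H, A⁆ = (2 : K) • A) (hA : IsNilpotent A) :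
    Set.SurjOn (H + (2 : K) • 1 : End K V) A.ker A.ker := by
  have mapsTo : ∀ v ∈ A.ker, (H + (2 : K) • 1) v ∈ A.ker := by
    intro v hv
    have hv' : A v = 0 := hv
    have := LinearMap.congr_fun hHA v
    simpa [Ring.lie_def, hv'] using this
  refine (LinearMap.injOn_iff_surjOn mapsTo).mp fun v hv w hw hvw ↦ ?_
  by_contra hne
  have hHvw : H (v - w) = (-2 : K) • (v - w) := by
    rw [← sub_eq_zero, ← map_sub] at hvw
    rw [neg_smul]
    exact eq_neg_of_add_eq_zero_left hvw
  obtain ⟨n, hn⟩ := exists_nat_eq_eigenvalue_of_mem_ker hAB hHA hA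
    (sub_ne_zero.mpr hne) (A.ker.sub_mem hv hw) hHvw
  have : ((n + 2 : ℕ) : K) = 0 := by
    push_cast
    rw [← hn, neg_add_cancel]
  exact absurd this (Nat.cast_ne_zero.mpr (Nat.succ_ne_zero _))

end WeightsOnKernel

section EigenspaceProjection

open Module

variable {K V : Type*} [CommRing K] [IsDomain K] [AddCommGroup V] [Module K V] [IsTorsionFree K V]
  {X : End K V}

lemma isCompl_eigenspace_iSup (hX : ⨆ μ, X.eigenspace μ = ⊤) (t : K) :
    IsCompl (X.eigenspace t) (⨆ (s) (_ : s ≠ t), X.eigenspace s) where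
  disjoint := X.eigenspaces_iSupIndep t
  codisjoint := by rw [codisjoint_iff, ← iSup_split_single, hX]

variable (hX : ⨆ μ, X.eigenspace μ = ⊤)

/-- The spectral projection of a diagonalizable operator `X` onto its `t`-eigenspace, along the sum
of the other eigenspaces. When `X = ad χ` it takes an element to its component of degree `t`. -/
noncomputable def eigenspaceProjection (t : K) : End K V :=
  (X.eigenspace t).projection _ (isCompl_eigenspace_iSup hX t)

lemma eigenspaceProjection_mem (t : K) (v : V) : eigenspaceProjection hX t v ∈ X.eigenspace t :=
  Submodule.projection_apply_mem _ v

lemma eigenspaceProjection_apply_of_mem {t : K} {v : V} (hv : v ∈ X.eigenspace t) :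
    eigenspaceProjection hX t v = v :=
  Submodule.projection_apply_of_mem_left _ hv

lemma eigenspaceProjection_apply_of_mem_of_ne {s t : K} {v : V} (hv : v ∈ X.eigenspace s)
    (hst : s ≠ t) : eigenspaceProjection hX t v = 0 :=
  Submodule.projection_apply_of_mem_right _ <|
    Submodule.mem_iSup_of_mem s (Submodule.mem_iSup_of_mem hst hv)

lemma eigenspaceProjection_mul_of_lie_eq_smul {T : End K V} {s : K} (hXT : ⁅X, T⁆ = s • T) (t : K) :
    eigenspaceProjection hX (s + t) * T = T * eigenspaceProjection hX t := by
  have shift {r : K} {v : V} (hv : v ∈ X.eigenspace r) : T v ∈ X.eigenspace (s + r) := by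
    have := LinearMap.congr_fun hXT v
    rw [End.mem_eigenspace_iff] at hv ⊢
    simp only [Ring.lie_def, LinearMap.sub_apply, End.mul_apply, hv, map_smul,
      LinearMap.smul_apply, sub_eq_iff_eq_add] at this
    rw [this, add_smul]
  rw [← LinearMap.eqLocus_eq_top, eq_top_iff, ← hX]
  refine iSup_le fun r v hv ↦ ?_
  rw [LinearMap.mem_eqLocus, End.mul_apply, End.mul_apply]
  obtain rfl | hrt := eq_or_ne r t
  · rw [eigenspaceProjection_apply_of_mem hX hv, eigenspaceProjection_apply_of_mem hX (shift hv)]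
  · rw [eigenspaceProjection_apply_of_mem_of_ne hX hv hrt, map_zero,
      eigenspaceProjection_apply_of_mem_of_ne hX (shift hv) (by simpa using hrt)]

end EigenspaceProjection

section LieAlgebra

open LieAlgebra Module

attribute [local instance] LieRing.ofAssociativeRing

variable {K L : Type*} [Field K] [LieRing L] [LieAlgebra K L]

lemma lie_ad_ad_of_mem_eigenspace {χ x : L} {s : K} (hx : x ∈ (ad K L χ).eigenspace s) :
    ⁅ad K L χ, ad K L x⁆ = s • ad K L x := by
  rw [End.mem_eigenspace_iff, ad_apply] at hx
  rw [← LieHom.map_lie, hx, map_smul]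

lemma isNilpotent_ad_of_mem_eigenspace [CharZero K] [FiniteDimensional K L] {χ e : L} {c : K}
    (hc : c ≠ 0) (he : e ∈ (ad K L χ).eigenspace c) : IsNilpotent (ad K L e) :=
  isNilpotent_of_lie_eq_smul hc (lie_ad_ad_of_mem_eigenspace he)

lemma lie_eigenspaceProjection_ad {χ x : L} (hχ : ⨆ μ, (ad K L χ).eigenspace μ = ⊤) {s : K}
    (hx : x ∈ (ad K L χ).eigenspace s) (t : K) (y : L) :
    ⁅x, eigenspaceProjection hχ t y⁆ = eigenspaceProjection hχ (s + t) ⁅x, y⁆ :=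
  (LinearMap.congr_fun
    (eigenspaceProjection_mul_of_lie_eq_smul hχ (lie_ad_ad_of_mem_eigenspace hx) t) y).symm

lemma traceForm_eq_zero_of_lie_lie_eq_zero {M : Type*} [AddCommGroup M] [Module K M]
    [LieRingModule L M] [LieModule K L M] [CharZero K] {e y : L}
    (he : IsNilpotent (LieModule.toEnd K L M e)) (hey : ⁅e, ⁅e, y⁆⁆ = 0) :
    LieModule.traceForm K L M e y = 0 := by
  have : IsAddTorsionFree (End K M) := .of_isTorsionFree K _
  have hcomm : Commute (LieModule.toEnd K L M e)
      ⁅LieModule.toEnd K L M e, LieModule.toEnd K L M y⁆ := by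
    rw [commute_iff_lie_eq, ← LieHom.map_lie, ← LieHom.map_lie, hey, map_zero]
  exact (LinearMap.isNilpotent_trace_of_isNilpotent
    (isNilpotent_mul_of_commute_lie hcomm he)).eq_zero

variable [FiniteDimensional K L] [CharZero K]

lemma exists_lie_lie_eq_self_of_isNilpotent_ad [IsKilling K L] {e : L}
    (he : IsNilpotent (ad K L e)) :
    ∃ y, ⁅e, ⁅e, y⁆⁆ = e := by
  suffices e ∈ (ad K L e ^ 2).range by simpa [pow_two] using this
  rw [← LinearMap.BilinForm.orthogonal_orthogonal (IsKilling.killingForm_nondegenerate K L)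
    (LieModule.traceForm_isSymm K L L).isRefl (ad K L e ^ 2).range]
  intro z hz
  have hez : ⁅e, ⁅e, z⁆⁆ = 0 := by
    refine (IsKilling.killingForm_nondegenerate K L).2 _ fun w ↦ ?_
    have hzw : killingForm K L ⁅e, ⁅e, w⁆⁆ z = 0 := hz _ ⟨w, by simp [pow_two]⟩
    rwa [LieModule.traceForm_apply_lie_apply', LieModule.traceForm_apply_lie_apply', neg_neg] at hzw
  rw [LieModule.traceForm_comm]
  exact traceForm_eq_zero_of_lie_lie_eq_zero he hez

lemma exists_isSl2Triple_of_lie_lie_eq_two_smul {e z : L} (he0 : e ≠ 0)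
    (he : IsNilpotent (ad K L e)) (hze : ⁅⁅e, z⁆, e⁆ = (2 : K) • e) :
    ∃ f, IsSl2Triple ⁅e, z⁆ e f := by
  set h := ⁅e, z⁆ with hh
  have heh : ⁅e, h⁆ = (-2 : K) • e := by rw [← lie_skew, hze, neg_smul]
  let T : End K L := ad K L h + (2 : K) • 1
  have hT (x : L) : T x = ⁅h, x⁆ + (2 : K) • x := by simp [T]
  have hTz : T z ∈ (ad K L e).ker := by
    rw [LinearMap.mem_ker, ad_apply, hT, lie_add, lie_smul, leibniz_lie, heh, smul_lie, ← hh,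
      lie_self]
    module
  obtain ⟨v, hv, hTv⟩ : ∃ v ∈ (ad K L e).ker, T v = T z :=
    surjOn_add_two_smul_ker (B := ad K L z) (by rw [← LieHom.map_lie])
      (by rw [← LieHom.map_lie, hze, map_smul]) he hTz
  have hev : ⁅e, v⁆ = 0 := by simpa using hv
  have hhzv : ⁅h, z - v⁆ + (2 : K) • (z - v) = 0 := by rw [← hT, map_sub, hTv, sub_self]
  refine ⟨z - v, ?_, ?_, ?_, ?_⟩
  · intro h0
    rw [h0, zero_lie, eq_comm, smul_eq_zero_iff_right two_ne_zero] at hze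
    exact he0 hze
  · rw [lie_sub, hev, sub_zero]
  · rw [hze, ofNat_smul_eq_nsmul]
  · rw [eq_neg_of_add_eq_zero_left hhzv, ofNat_smul_eq_nsmul]

theorem stmt_10_general [IsKilling K L] {χ e : L} {c : K}
    (hχ : ⨆ μ, (ad K L χ).eigenspace μ = ⊤) (hec : e ∈ (ad K L χ).eigenspace c)
    (he : IsNilpotent (ad K L e)) (he0 : e ≠ 0) :
    ∃ h ∈ (ad K L χ).eigenspace 0, ∃ f ∈ (ad K L χ).eigenspace (-c), IsSl2Triple h e f := by
  obtain ⟨y, hy⟩ := exists_lie_lie_eq_self_of_isNilpotent_ad he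
  let z := eigenspaceProjection hχ (-c) ((-2 : K) • y)
  have hez : ⁅e, z⁆ ∈ (ad K L χ).eigenspace 0 := by
    rw [lie_eigenspaceProjection_ad hχ hec, add_neg_cancel]
    exact eigenspaceProjection_mem hχ 0 _
  have hze : ⁅⁅e, z⁆, e⁆ = (2 : K) • e := by
    rw [← lie_skew, lie_eigenspaceProjection_ad hχ hec, lie_eigenspaceProjection_ad hχ hec,
      add_neg_cancel, add_zero, lie_smul, lie_smul, hy, map_smul,
      eigenspaceProjection_apply_of_mem hχ hec, neg_smul, neg_neg]
  obtain ⟨f, hf⟩ := exists_isSl2Triple_of_lie_lie_eq_two_smul he0 he hze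
  refine ⟨_, hez, eigenspaceProjection hχ (-c) f, eigenspaceProjection_mem hχ _ f,
    hf.h_ne_zero, ?_, hf.lie_h_e_nsmul, ?_⟩
  · rw [lie_eigenspaceProjection_ad hχ hec, hf.lie_e_f, add_neg_cancel,
      eigenspaceProjection_apply_of_mem hχ hez]
  · rw [lie_eigenspaceProjection_ad hχ hez, hf.lie_h_f_nsmul, zero_add, map_neg, map_nsmul]

end LieAlgebra

/-- Graded Jacobson–Morozov: in a complex semisimple Lie algebra, if `χ` is a semisimple
element (its adjoint action is diagonalizable) and `e ≠ 0` lies in the `1`-eigenspace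
`g_1` of `ad χ`, then there are `h ∈ g_0` and `f ∈ g_{-1}` with `(e,h,f)` an
`sl(2)`-triple: `[h,e] = 2e`, `[h,f] = -2f`, `[e,f] = h`. -/
theorem stmt_10 (g : Type*) [LieRing g] [LieAlgebra ℂ g] [FiniteDimensional ℂ g]
    [LieAlgebra.IsSemisimple ℂ g]
    (χ : g) (hχdiag : (⨆ μ : ℂ, Module.End.eigenspace (LieAlgebra.ad ℂ g χ) μ) = ⊤)
    (e : g) (he : e ∈ Module.End.eigenspace (LieAlgebra.ad ℂ g χ) 1) (he0 : e ≠ 0) :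
    ∃ h ∈ Module.End.eigenspace (LieAlgebra.ad ℂ g χ) 0,
      ∃ f ∈ Module.End.eigenspace (LieAlgebra.ad ℂ g χ) (-1),
        ⁅h, e⁆ = (2 : ℂ) • e ∧ ⁅h, f⁆ = (-2 : ℂ) • f ∧ ⁅e, f⁆ = h := by
  obtain ⟨h, hh, f, hf, t⟩ :=
    stmt_10_general hχdiag he (isNilpotent_ad_of_mem_eigenspace one_ne_zero he) he0
  exact ⟨h, hh, f, hf, t.lie_h_e_smul ℂ, by rw [t.lie_lie_smul_f ℂ, neg_smul], t.lie_e_f⟩
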